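/- Let $N, p, q \in \mathbb{N}$, let $c_1, \dots, c_N \in \mathbb{R}$, $d \in \mathbb{R}^p$, and let $y_j : \mathbb{N} \to \mathbb{R}^p$ and $u_j : \mathbb{N} \to \mathbb{R}^q$ for $j = 1, \dots, N$. Fix an index $i$ and define $\xi(k) = \sum_{j=1}^{N} c_j y_j(k) + d$. Suppose there are constants $\phi_j \geq 0$ and $\sigma_j \geq 0$ such that for all $k \geq 1$: $\|y_j(k+1) - y_j(k)\| \leq \phi_j \|u_j(k) - u_j(k-1)\|$ and $\|u_j(k) - u_j(k-1)\| \leq \sigma_j \|u_i(k) - u_i(k-1)\|$. Then for every $k \geq 1$ with $u_i(k) \neq u_i(k-1)$ there exists a matrix $\Phi_i(k) \in \mathbb{R}^{p \times q}$ such that $\xi(k+1) - \xi(k) = \Phi_i(k)\,(u_i(k) - u_i(k-1))$ and the operator norm satisfies $\|\Phi_i(k)\| \leq \sum_{j=1}^{N} |c_j| \phi_j \sigma_j$. -/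

import Mathlib

open Finset Matrix

/-- The operator norm of a real matrix, induced by the Euclidean norms on domain
and codomain. -/
noncomputable def matOpNorm {p q : ℕ} (A : Matrix (Fin p) (Fin q) ℝ) : ℝ :=
  ‖(LinearMap.toContinuousLinearMap (Matrix.toEuclideanLin A) :
      EuclideanSpace ℝ (Fin q) →L[ℝ] EuclideanSpace ℝ (Fin p))‖

/-- distributed compact form dynamic linearization (DCFDL): the NABCE
increment admits a bounded pseudo-partitioned Jacobian matrix. -/
theorem dcfdl (N p q : ℕ) (c : Fin N → ℝ)
    (d : EuclideanSpace ℝ (Fin p))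
    (y : Fin N → ℕ → EuclideanSpace ℝ (Fin p))
    (u : Fin N → ℕ → EuclideanSpace ℝ (Fin q))
    (i : Fin N) (ξ : ℕ → EuclideanSpace ℝ (Fin p))
    (hξ : ∀ k, ξ k = (∑ j, c j • y j k) + d)
    (φ σ : Fin N → ℝ) (hφ : ∀ j, 0 ≤ φ j) (hσ : ∀ j, 0 ≤ σ j)
    (hy : ∀ j, ∀ k ≥ 1, ‖y j (k + 1) - y j k‖ ≤ φ j * ‖u j k - u j (k - 1)‖)
    (hu : ∀ j, ∀ k ≥ 1, ‖u j k - u j (k - 1)‖ ≤ σ j * ‖u i k - u i (k - 1)‖) :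
    ∀ k ≥ 1, u i k ≠ u i (k - 1) →
      ∃ Φ : Matrix (Fin p) (Fin q) ℝ,
        ξ (k + 1) - ξ k = Matrix.toEuclideanLin Φ (u i k - u i (k - 1)) ∧
        matOpNorm Φ ≤ ∑ j, |c j| * φ j * σ j := by
  intro k hk hne
  set w := u i k - u i (k - 1) with hw
  have hw0 : 0 < ‖w‖ := norm_pos_iff.mpr (sub_ne_zero.mpr hne)
  have hb : ‖ξ (k + 1) - ξ k‖ ≤ (∑ j, |c j| * φ j * σ j) * ‖w‖ := by
    have h1 : ξ (k + 1) - ξ k = ∑ j, c j • (y j (k + 1) - y j k) := by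
      rw [hξ, hξ, add_sub_add_right_eq_sub, ← Finset.sum_sub_distrib]
      simp only [smul_sub]
    rw [h1, Finset.sum_mul]
    refine (norm_sum_le _ _).trans (Finset.sum_le_sum fun j _ => ?_)
    rw [norm_smul, Real.norm_eq_abs, mul_assoc, mul_assoc]
    refine mul_le_mul_of_nonneg_left ?_ (abs_nonneg _)
    exact (hy j k hk).trans (mul_le_mul_of_nonneg_left (hu j k hk) (hφ j))
  set D := ξ (k + 1) - ξ k with hD
  let L : EuclideanSpace ℝ (Fin q) →L[ℝ] EuclideanSpace ℝ (Fin p) :=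
    (innerSL ℝ w).smulRight ((‖w‖ ^ 2)⁻¹ • D)
  refine ⟨Matrix.toEuclideanLin.symm L.toLinearMap, ?_, ?_⟩
  · rw [LinearEquiv.apply_symm_apply]
    change D = inner ℝ w w • ((‖w‖ ^ 2)⁻¹ • D)
    rw [real_inner_self_eq_norm_sq, smul_smul, mul_inv_cancel₀ (by positivity), one_smul]
  · unfold matOpNorm
    rw [LinearEquiv.apply_symm_apply]
    change ‖L‖ ≤ _
    have h2 : ‖L‖ = ‖w‖ * ((‖w‖ ^ 2)⁻¹ * ‖D‖) := by
      rw [ContinuousLinearMap.norm_smulRight_apply, innerSL_apply_norm, norm_smul]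
      simp
    have h3 : ‖w‖ * ((‖w‖ ^ 2)⁻¹ * ‖D‖) = ‖D‖ / ‖w‖ := by
      field_simp
    rw [h2, h3, div_le_iff₀ hw0]
    exact hb
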